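/- Let p ≥ 1 and let f, g be two positive continuous functions on [0, ∞) such that for x > 0 the integral I^{α,β,η,μ}_{x,k}[(f+g)^p] is finite. If f(τ)/g(τ) ≤ M for all τ ∈ (0, x) with M > 0, then (I^{α,β,η,μ}_{x,k}[f^p])^{1/p} ≤ (M/(M+1)) · (I^{α,β,η,μ}_{x,k}[(f+g)^p])^{1/p}. -/

import Mathlib

/-!
On `(0, x)` the bound `f / g ≤ M` rearranges to `f ≤ M / (M + 1) * (f + g)`, hence
`f ^ p ≤ (M / (M + 1)) ^ p * (f + g) ^ p`. The operator has a nonnegative kernel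
(`Fker_nonneg`): under the parameter constraints all three hypergeometric parameters
`α + β + μ`, `-η`, `α` are positive, so the Gauss series at a nonnegative argument has nonnegative
terms. Integrating the pointwise inequality and taking `p`-th roots gives the result.
-/


open MeasureTheory Real Set

/-- The Gauss hypergeometric series `₂F₁(a, b; c; z)`. -/
noncomputable def gauss2F1 (a b c z : ℝ) : ℝ :=
  ∑' n : ℕ, ((ascPochhammer ℝ n).eval a * (ascPochhammer ℝ n).eval b /
    ((ascPochhammer ℝ n).eval c * (n.factorial : ℝ))) * z ^ n

/-- The kernel `F(x, τ)` of the generalized k-fractional integral operator. -/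
noncomputable def Fker (α β η μ k x τ : ℝ) : ℝ :=
  ((k + 1) ^ (μ + β + 1) * x ^ ((k + 1) * (-α - β - 2 * μ)) / Real.Gamma α) *
    τ ^ ((k + 1) * μ) * (x ^ (k + 1) - τ ^ (k + 1)) ^ (α - 1) *
    gauss2F1 (α + β + μ) (-η) α (1 - (τ / x) ^ (k + 1))

/-- The generalized k-fractional integral operator `I^{α,β,η,μ}_{x,k}[f]`. -/
noncomputable def genKInt (α β η μ k x : ℝ) (f : ℝ → ℝ) : ℝ :=
  ∫ τ in (0:ℝ)..x, Fker α β η μ k x τ * τ ^ k * f τ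

theorem gauss2F1_nonneg {a b c z : ℝ} (ha : 0 < a) (hb : 0 < b) (hc : 0 < c) (hz : 0 ≤ z) :
    0 ≤ gauss2F1 a b c z := by
  refine tsum_nonneg fun n => ?_
  have h1 := ascPochhammer_pos n a ha
  have h2 := ascPochhammer_pos n b hb
  have h3 := ascPochhammer_pos n c hc
  positivity

theorem Fker_nonneg {α β η μ k x τ : ℝ} (hk : 0 ≤ k) (hα : max 0 (-β - μ) < α) (hη : η < 0)
    (hτ : 0 < τ) (hτx : τ < x) : 0 ≤ Fker α β η μ k x τ := by
  obtain ⟨hα0, hα1⟩ := max_lt_iff.1 hα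
  have hx : 0 < x := hτ.trans hτx
  have hΓ := Real.Gamma_pos_of_pos hα0
  have hd : 0 ≤ x ^ (k + 1) - τ ^ (k + 1) :=
    sub_nonneg.2 (Real.rpow_le_rpow hτ.le hτx.le (by linarith))
  have hz : 0 ≤ 1 - (τ / x) ^ (k + 1) :=
    sub_nonneg.2 (Real.rpow_le_one (by positivity) ((div_le_one hx).2 hτx.le) (by linarith))
  have hG := gauss2F1_nonneg (a := α + β + μ) (b := -η) (c := α) (by linarith) (by linarith)
    hα0 hz
  unfold Fker
  positivity

theorem upper_bound_f (α β η μ k x : ℝ)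
    (hk : 0 ≤ k) (hα : max 0 (-β - μ) < α) (hβ : β < 1) (hμ : -1 < μ)
    (hη1 : β - 1 < η) (hη2 : η < 0) (hx : 0 < x) (p M : ℝ) (f g : ℝ → ℝ)
    (hfc : ContinuousOn f (Ici 0)) (hgc : ContinuousOn g (Ici 0))
    (hfpos : ∀ t ∈ Ici (0:ℝ), 0 < f t) (hgpos : ∀ t ∈ Ici (0:ℝ), 0 < g t)
    (hp : 1 ≤ p) (hM : 0 < M)
    (hfin : IntervalIntegrable (fun τ => Fker α β η μ k x τ * τ ^ k * ((f τ + g τ) ^ p)) volume 0 x)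
    (hbd : ∀ τ ∈ Ioo (0:ℝ) x, f τ / g τ ≤ M) :
    (genKInt α β η μ k x (fun τ => f τ ^ p)) ^ (1 / p) ≤
      (M / (M + 1)) * (genKInt α β η μ k x (fun τ => (f τ + g τ) ^ p)) ^ (1 / p) := by
  have hp0 : 0 < p := by linarith
  have hC : 0 ≤ M / (M + 1) := by positivity
  have hK : ∀ τ ∈ Ioo (0:ℝ) x, 0 ≤ Fker α β η μ k x τ * τ ^ k := fun τ hτ =>
    mul_nonneg (Fker_nonneg hk hα hη2 hτ.1 hτ.2) (Real.rpow_nonneg hτ.1.le _)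
  -- The endpoint `x`, where the bound on `f / g` is not assumed, is a null set.
  have hI : ∀ h : ℝ → ℝ, genKInt α β η μ k x h =
      ∫ τ in Ioo (0:ℝ) x, Fker α β η μ k x τ * τ ^ k * h τ := fun h => by
    rw [genKInt, intervalIntegral.integral_of_le hx.le, integral_Ioc_eq_integral_Ioo]
  have hnonneg : ∀ h : ℝ → ℝ, (∀ τ ∈ Ioo (0:ℝ) x, 0 ≤ h τ) → 0 ≤ genKInt α β η μ k x h :=
    fun h hh => by
      rw [hI]
      exact setIntegral_nonneg measurableSet_Ioo fun τ hτ => mul_nonneg (hK τ hτ) (hh τ hτ)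
  have hf0 : ∀ τ ∈ Ioo (0:ℝ) x, 0 < f τ := fun τ hτ => hfpos τ hτ.1.le
  have hg0 : ∀ τ ∈ Ioo (0:ℝ) x, 0 < g τ := fun τ hτ => hgpos τ hτ.1.le
  have hA := hnonneg (fun τ => f τ ^ p) fun τ hτ => Real.rpow_nonneg (hf0 τ hτ).le _
  have hB := hnonneg (fun τ => (f τ + g τ) ^ p) fun τ hτ =>
    Real.rpow_nonneg (add_pos (hf0 τ hτ) (hg0 τ hτ)).le _
  have hint : IntegrableOn (fun τ => Fker α β η μ k x τ * τ ^ k * ((f τ + g τ) ^ p))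
      (Ioo 0 x) volume :=
    ((intervalIntegrable_iff_integrableOn_Ioc_of_le hx.le).1 hfin).mono_set Ioo_subset_Ioc_self
  have key : genKInt α β η μ k x (fun τ => f τ ^ p) ≤
      (M / (M + 1)) ^ p * genKInt α β η μ k x (fun τ => (f τ + g τ) ^ p) := by
    rw [hI, hI, ← integral_const_mul]
    -- Only the majorant has to be integrable, so no integrability of the `f ^ p` term is needed.
    refine integral_mono_of_nonneg ?_ (hint.const_mul _) ?_
    · filter_upwards [ae_restrict_mem measurableSet_Ioo] with τ hτ
      exact mul_nonneg (hK τ hτ) (Real.rpow_nonneg (hf0 τ hτ).le _)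
    · filter_upwards [ae_restrict_mem measurableSet_Ioo] with τ hτ
      have hf := hf0 τ hτ
      have hg := hg0 τ hτ
      have h1 : f τ ≤ M / (M + 1) * (f τ + g τ) := by
        have := (div_le_iff₀ hg).1 (hbd τ hτ)
        rw [div_mul_eq_mul_div, le_div_iff₀ (by positivity)]
        linarith
      have h2 : f τ ^ p ≤ (M / (M + 1)) ^ p * (f τ + g τ) ^ p := by
        rw [← Real.mul_rpow hC (by positivity)]
        exact Real.rpow_le_rpow hf.le h1 hp0.le
      calc _ ≤ Fker α β η μ k x τ * τ ^ k * ((M / (M + 1)) ^ p * (f τ + g τ) ^ p) :=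
            mul_le_mul_of_nonneg_left h2 (hK τ hτ)
        _ = _ := by ring
  calc _ ≤ ((M / (M + 1)) ^ p * genKInt α β η μ k x (fun τ => (f τ + g τ) ^ p)) ^ (1 / p) :=
        Real.rpow_le_rpow hA key (by positivity)
    _ = _ := by
        rw [Real.mul_rpow (by positivity) hB, one_div, Real.rpow_rpow_inv hC hp0.ne']
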